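/- arXiv:1102.0659 — 4 statements merged into one kernel-verified Lean document; each statement's English description precedes it below -/
import Mathlib

section
/- Let n be a natural number and let a, b, c be complex numbers such that for 0 ≤ k ≤ n the quantities (c)_k and (1−n+a+b−c)_k are nonzero, and (c)_n and (c−a−b)_n are nonzero. Then ∑_{k=0}^{n} ((a)_k (b)_k (−n)_k) / ((c)_k (1−n+a+b−c)_k k!) = ((c−a)_n (c−b)_n) / ((c)_n (c−a−b)_n). -/
/-- The rising factorial `(x)_m = x(x+1)⋯(x+m−1)`, with `(x)_0 = 1`. -/
def risingFactorial (x : ℂ) (m : ℕ) : ℂ := ∏ i ∈ Finset.range m, (x + i)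

/-!
The summand, cleared of denominators, is the entry `T n k` of a triangular array that satisfies a
Pascal-type recurrence `T (n + 1) (k + 1) = α n (k + 1) * T n (k + 1) + β k * T n k`, where
`α n k = (c - a - b + n - k) * (c + n + k)` and `β k = (a + k) * (b + k)`. Since
`α n k + β k = (c - a + n) * (c - b + n)` does not depend on `k`, each row sum is this constant
times the previous one.
-/

theorem ascPochhammer_eval_add {R : Type*} [CommSemiring R] (x : R) (k m : ℕ) :
    (ascPochhammer R (k + m)).eval x =
      (ascPochhammer R k).eval x * (ascPochhammer R m).eval (x + k) := by
  simp [← ascPochhammer_mul]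

theorem ascPochhammer_eval_neg_natCast {R : Type*} [Ring R] (n k : ℕ) :
    (ascPochhammer R k).eval (-(n : R)) = (-1) ^ k * (k.factorial * n.choose k) := by
  rw [ascPochhammer_eval_neg_eq_descPochhammer, descPochhammer_eval_eq_descFactorial,
    Nat.descFactorial_eq_factorial_mul_choose, Nat.cast_mul]

section CommRing

variable {R : Type*} [CommRing R]

theorem ascPochhammer_eval_reflect (x : R) {n k : ℕ} (hk : k ≤ n) :
    (ascPochhammer R k).eval (1 - n - x) * (ascPochhammer R (n - k)).eval x =
      (-1) ^ k * (ascPochhammer R n).eval x := by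
  obtain ⟨m, rfl⟩ := Nat.exists_eq_add_of_le' hk
  have h_shift : (ascPochhammer R k).eval (1 - ((m + k : ℕ) : R) - x) =
      (-1) ^ k * (ascPochhammer R k).eval (x + m) := by
    rw [show 1 - ((m + k : ℕ) : R) - x = -(x + m + k - 1) by push_cast; ring,
      ascPochhammer_eval_neg_eq_descPochhammer, descPochhammer_eval_eq_ascPochhammer]
    congr 2
    ring
  rw [h_shift, Nat.add_sub_cancel, ascPochhammer_eval_add]
  ring

/-- The `k`-th summand of the balanced series `₃F₂(a, b, -n; c, 1 - n + a + b - c; 1)`, multiplied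
by the common denominator `(c)_n (c - a - b)_n`, which makes it polynomial in `a`, `b`, `c`.
Truncation in `n - k` is harmless, as the binomial coefficient vanishes for `k > n`. -/
noncomputable def saalschutzTerm (a b c : R) (n k : ℕ) : R :=
  n.choose k * (ascPochhammer R k).eval a * (ascPochhammer R k).eval b *
    (ascPochhammer R (n - k)).eval (c - a - b) * (ascPochhammer R (n - k)).eval (c + k)

theorem saalschutzTerm_eq_zero_of_lt (a b c : R) {n k : ℕ} (h : n < k) :
    saalschutzTerm a b c n k = 0 := by
  simp [saalschutzTerm, Nat.choose_eq_zero_of_lt h]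

theorem saalschutzTerm_succ_zero (a b c : R) (n : ℕ) :
    saalschutzTerm a b c (n + 1) 0 =
      (c - a - b + n) * (c + n) * saalschutzTerm a b c n 0 := by
  simp only [saalschutzTerm, Nat.choose_zero_right, Nat.sub_zero, Nat.cast_zero, add_zero,
    ascPochhammer_succ_eval]
  ring

theorem saalschutzTerm_succ_succ (a b c : R) {n k : ℕ} (hk : k ≤ n) :
    saalschutzTerm a b c (n + 1) (k + 1) =
      (c - a - b + n - (k + 1)) * (c + n + (k + 1)) * saalschutzTerm a b c n (k + 1) +
        (a + k) * (b + k) * saalschutzTerm a b c n k := by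
  obtain rfl | hlt := hk.eq_or_lt
  · rw [saalschutzTerm_eq_zero_of_lt a b c k.lt_succ_self]
    simp only [saalschutzTerm, Nat.choose_self, Nat.sub_self, ascPochhammer_zero,
      Polynomial.eval_one, ascPochhammer_succ_eval]
    ring
  obtain ⟨m, rfl⟩ := Nat.exists_eq_add_of_lt hlt
  have h_pascal : ((k + m + 1 + 1).choose (k + 1) : R) =
      (k + m + 1).choose k + (k + m + 1).choose (k + 1) := by
    rw [Nat.choose_succ_succ, Nat.cast_add]
  have h_absorb : ((k + m + 1).choose (k + 1) : R) * (k + 1) =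
      (k + m + 1).choose k * (m + 1) := by
    have := Nat.choose_succ_right_eq (k + m + 1) k
    rw [show k + m + 1 - k = m + 1 by lia] at this
    exact_mod_cast congrArg (Nat.cast : ℕ → R) this
  have h_left : (ascPochhammer R (m + 1)).eval (c + k) =
      (c + k) * (ascPochhammer R m).eval (c + (k + 1)) := by
    simp [ascPochhammer_succ_left, add_assoc]
  simp only [saalschutzTerm, show k + m + 1 + 1 - (k + 1) = m + 1 by lia,
    show k + m + 1 - k = m + 1 by lia, show k + m + 1 - (k + 1) = m by lia, Nat.cast_add,
    Nat.cast_one, h_pascal, h_left, ascPochhammer_succ_eval]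
  linear_combination (-(ascPochhammer R k).eval a * (a + k) * (ascPochhammer R k).eval b * (b + k) *
    (ascPochhammer R m).eval (c - a - b) * (c - a - b + m) *
    (ascPochhammer R m).eval (c + (k + 1))) * h_absorb

theorem sum_saalschutzTerm_succ (a b c : R) (n : ℕ) :
    ∑ k ∈ Finset.range (n + 2), saalschutzTerm a b c (n + 1) k =
      (c - a + n) * (c - b + n) * ∑ k ∈ Finset.range (n + 1), saalschutzTerm a b c n k := by
  let α (k : ℕ) : R := (c - a - b + n - k) * (c + n + k)
  let β (k : ℕ) : R := (a + k) * (b + k)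
  let T := saalschutzTerm a b c n
  have h_const (k : ℕ) : α k + β k = (c - a + n) * (c - b + n) := by
    simp only [α, β]
    ring
  calc ∑ k ∈ Finset.range (n + 2), saalschutzTerm a b c (n + 1) k
    _ = ∑ k ∈ Finset.range (n + 1), (α (k + 1) * T (k + 1) + β k * T k) + α 0 * T 0 := by
      rw [Finset.sum_range_succ', saalschutzTerm_succ_zero]
      congr 1
      · refine Finset.sum_congr rfl fun k hk ↦ ?_
        rw [saalschutzTerm_succ_succ a b c (Finset.mem_range_succ_iff.mp hk)]
        simp only [α, β, T, Nat.cast_add, Nat.cast_one]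
      · simp only [α, T, Nat.cast_zero, sub_zero, add_zero]
    _ = ∑ k ∈ Finset.range (n + 2), α k * T k + ∑ k ∈ Finset.range (n + 1), β k * T k := by
      rw [Finset.sum_add_distrib, Finset.sum_range_succ' _ (n + 1)]
      ring
    _ = ∑ k ∈ Finset.range (n + 1), (α k + β k) * T k := by
      rw [Finset.sum_range_succ, show T (n + 1) = 0 from
        saalschutzTerm_eq_zero_of_lt a b c n.lt_succ_self, mul_zero, add_zero,
        ← Finset.sum_add_distrib]
      simp only [add_mul]
    _ = (c - a + n) * (c - b + n) * ∑ k ∈ Finset.range (n + 1), T k := by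
      simp only [h_const, Finset.mul_sum]

theorem sum_saalschutzTerm (a b c : R) (n : ℕ) :
    ∑ k ∈ Finset.range (n + 1), saalschutzTerm a b c n k =
      (ascPochhammer R n).eval (c - a) * (ascPochhammer R n).eval (c - b) := by
  induction n with
  | zero => simp [saalschutzTerm]
  | succ n ih =>
    rw [sum_saalschutzTerm_succ, ih, ascPochhammer_succ_eval, ascPochhammer_succ_eval]
    ring

end CommRing

section Field

variable {K : Type*} [Field K]

theorem saalschutz_summand_eq_saalschutzTerm_div {n k : ℕ} {a b c : K} (hk : k ≤ n)
    (hn : (n.factorial : K) ≠ 0) (hc : (ascPochhammer K n).eval c ≠ 0)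
    (hcab : (ascPochhammer K n).eval (c - a - b) ≠ 0) :
    ((ascPochhammer K k).eval a * (ascPochhammer K k).eval b *
        (ascPochhammer K k).eval (-(n : K))) /
      ((ascPochhammer K k).eval c * (ascPochhammer K k).eval (1 - n + a + b - c) * k.factorial) =
      saalschutzTerm a b c n k /
        ((ascPochhammer K n).eval c * (ascPochhammer K n).eval (c - a - b)) := by
  have hc_split : (ascPochhammer K n).eval c =
      (ascPochhammer K k).eval c * (ascPochhammer K (n - k)).eval (c + k) := by
    rw [← ascPochhammer_eval_add, Nat.add_sub_cancel' hk]
  have h_reflect : (ascPochhammer K k).eval (1 - n + a + b - c) *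
      (ascPochhammer K (n - k)).eval (c - a - b) =
        (-1) ^ k * (ascPochhammer K n).eval (c - a - b) := by
    rw [← ascPochhammer_eval_reflect _ hk]
    congr 2
    ring
  have hck : (ascPochhammer K k).eval c ≠ 0 := left_ne_zero_of_mul (hc_split ▸ hc)
  have hbal : (ascPochhammer K k).eval (1 - n + a + b - c) ≠ 0 :=
    left_ne_zero_of_mul (h_reflect ▸ mul_ne_zero (pow_ne_zero k (neg_ne_zero.mpr one_ne_zero)) hcab)
  have hk_factorial : (k.factorial : K) ≠ 0 :=
    ne_zero_of_dvd_ne_zero hn (Nat.cast_dvd_cast (Nat.factorial_dvd_factorial hk))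
  rw [div_eq_div_iff (mul_ne_zero (mul_ne_zero hck hbal) hk_factorial) (mul_ne_zero hc hcab),
    ascPochhammer_eval_neg_natCast, hc_split, saalschutzTerm]
  linear_combination (-((ascPochhammer K k).eval a * (ascPochhammer K k).eval b * k.factorial *
    n.choose k * (ascPochhammer K k).eval c * (ascPochhammer K (n - k)).eval (c + k))) * h_reflect

theorem pfaff_saalschutz_general (n : ℕ) (a b c : K) (hn : (n.factorial : K) ≠ 0)
    (hc : (ascPochhammer K n).eval c ≠ 0) (hcab : (ascPochhammer K n).eval (c - a - b) ≠ 0) :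
    ∑ k ∈ Finset.range (n + 1),
      ((ascPochhammer K k).eval a * (ascPochhammer K k).eval b *
          (ascPochhammer K k).eval (-(n : K))) /
        ((ascPochhammer K k).eval c * (ascPochhammer K k).eval (1 - n + a + b - c) *
          k.factorial) =
      ((ascPochhammer K n).eval (c - a) * (ascPochhammer K n).eval (c - b)) /
        ((ascPochhammer K n).eval c * (ascPochhammer K n).eval (c - a - b)) := by
  rw [← sum_saalschutzTerm, Finset.sum_div]
  exact Finset.sum_congr rfl fun k hk ↦
    saalschutz_summand_eq_saalschutzTerm_div (Finset.mem_range_succ_iff.mp hk) hn hc hcab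

end Field

theorem risingFactorial_eq_eval_ascPochhammer (x : ℂ) (m : ℕ) :
    risingFactorial x m = (ascPochhammer ℂ m).eval x := by
  induction m with
  | zero => simp [risingFactorial]
  | succ m ih =>
    rw [ascPochhammer_succ_eval, ← ih]
    exact Finset.prod_range_succ _ m

/-- The Pfaff–Saalschütz summation:
`∑_{k=0}^{n} (a)_k (b)_k (−n)_k / ((c)_k (1−n+a+b−c)_k k!)
  = (c−a)_n (c−b)_n / ((c)_n (c−a−b)_n)`. -/
theorem pfaff_saalschutz (n : ℕ) (a b c : ℂ)
    (hc : ∀ k ≤ n, risingFactorial c k ≠ 0)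
    (hbal : ∀ k ≤ n, risingFactorial (1 - n + a + b - c) k ≠ 0)
    (hcab : risingFactorial (c - a - b) n ≠ 0) :
    ∑ k ∈ Finset.range (n + 1),
      (risingFactorial a k * risingFactorial b k * risingFactorial (-(n : ℂ)) k) /
        (risingFactorial c k * risingFactorial (1 - n + a + b - c) k *
          (k.factorial : ℂ))
      = (risingFactorial (c - a) n * risingFactorial (c - b) n) /
          (risingFactorial c n * risingFactorial (c - a - b) n) := by
  simp only [risingFactorial_eq_eval_ascPochhammer] at hc hcab ⊢
  exact pfaff_saalschutz_general n a b c (mod_cast n.factorial_ne_zero) (hc n le_rfl) hcab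
end

section
/- Let n be a natural number and let q, a, b be complex numbers with a ≠ 0, q ≠ 0, such that (b;q)_k ≠ 0 and (q;q)_k ≠ 0 for 0 ≤ k ≤ n, and (b;q)_n ≠ 0. Then ∑_{k=0}^{n} ((a;q)_k (q^{−n};q)_k) / ((b;q)_k (q;q)_k) · (b q^n / a)^k = (b/a;q)_n / (b;q)_n. -/
/-- The q-shifted factorial `(a;q)_m = (1−a)(1−aq)⋯(1−a q^{m−1})`, with `(a;q)_0 = 1`. -/
def qShiftedFactorial (a q : ℂ) (m : ℕ) : ℂ := ∏ i ∈ Finset.range m, (1 - a * q ^ i)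

/-!
Let `w n k` be the coefficient of `x ^ k` in `(x;q)_n`. The functional equation
`(1 - x) (xq;q)_n = (x;q)_n (1 - x q ^ n)` yields a recursion in `k` which identifies
`(q;q)_k w n k` with `(q ^ (-n);q)_k q ^ (nk)`. Writing `b = a c` and multiplying by `(b;q)_n`
turns the sum into `∑_{i + j = n} w n i (a;q)_i c ^ i (a c q ^ i;q)_j = (c;q)_n`, an identity over
any commutative ring. Pascal's rule `w (n + 1) (k + 1) = w n (k + 1) - q ^ n w n k` reduces it
for `n + 1` to the instances `(a, c)` and `(a q, c)` for `n`.
-/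

open Finset Polynomial

section CommRing

variable {R : Type*} [CommRing R]

/-- The q-shifted factorial `(a;q)_m` over an arbitrary commutative ring, so that `a` may also be
a polynomial variable. Over `ℂ` it unfolds to `qShiftedFactorial`. -/
def qPochhammer (a q : R) (m : ℕ) : R := ∏ i ∈ range m, (1 - a * q ^ i)

@[simp]
theorem qPochhammer_zero (a q : R) : qPochhammer a q 0 = 1 := prod_range_zero _

theorem qPochhammer_succ (a q : R) (m : ℕ) :
    qPochhammer a q (m + 1) = qPochhammer a q m * (1 - a * q ^ m) :=
  prod_range_succ _ m

theorem qPochhammer_add (a q : R) (m n : ℕ) :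
    qPochhammer a q (m + n) = qPochhammer a q m * qPochhammer (a * q ^ m) q n := by
  simp only [qPochhammer, prod_range_add, pow_add, mul_assoc]

theorem qPochhammer_succ' (a q : R) (m : ℕ) :
    qPochhammer a q (m + 1) = (1 - a) * qPochhammer (a * q) q m := by
  rw [add_comm, qPochhammer_add, qPochhammer_succ, qPochhammer_zero, one_mul, pow_zero, mul_one,
    pow_one]

theorem map_qPochhammer {S : Type*} [CommRing S] (f : R →+* S) (a q : R) (m : ℕ) :
    f (qPochhammer a q m) = qPochhammer (f a) (f q) m := by
  simp only [qPochhammer, map_prod, map_sub, map_one, map_mul, map_pow]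

/-- The signed q-binomial coefficient `(-1) ^ k q ^ (k choose 2) [n choose k]_q`, encoded as the
coefficient of `X ^ k` in `(X;q)_n`, which makes sense even where `(q;q)_k` is not invertible. -/
noncomputable def signedQBinomial (q : R) (n k : ℕ) : R := (qPochhammer X (C q) n).coeff k

@[simp]
theorem signedQBinomial_zero_right (q : R) (n : ℕ) : signedQBinomial q n 0 = 1 := by
  rw [signedQBinomial, ← constantCoeff_apply, map_qPochhammer]
  simp [qPochhammer]

theorem signedQBinomial_succ_succ (q : R) (n k : ℕ) :
    signedQBinomial q (n + 1) (k + 1) =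
      signedQBinomial q n (k + 1) - q ^ n * signedQBinomial q n k := by
  rw [signedQBinomial, qPochhammer_succ, mul_sub, mul_one, ← mul_assoc, ← C_pow, coeff_sub,
    coeff_mul_C, coeff_mul_X, mul_comm, signedQBinomial, signedQBinomial]

theorem signedQBinomial_eq_zero_of_lt (q : R) {n k : ℕ} (h : n < k) :
    signedQBinomial q n k = 0 := by
  induction n generalizing k with
  | zero => simp [signedQBinomial, coeff_one, h.ne']
  | succ n ih =>
    obtain ⟨k, rfl⟩ := Nat.exists_eq_add_one_of_ne_zero (Nat.ne_zero_of_lt h)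
    rw [signedQBinomial_succ_succ, ih (by lia), ih (by lia), mul_zero, sub_zero]

theorem coeff_qPochhammer_X_mul_C (q : R) (n k : ℕ) :
    (qPochhammer (X * C q) (C q) n).coeff k = signedQBinomial q n k * q ^ k := by
  have hcomp : (qPochhammer X (C q) n).comp (C q * X) = qPochhammer (X * C q) (C q) n := by
    rw [← coe_compRingHom_apply, map_qPochhammer, coe_compRingHom_apply, coe_compRingHom_apply,
      X_comp, C_comp, mul_comm]
  rw [← hcomp, comp_C_mul_X_coeff, signedQBinomial]

theorem one_sub_pow_succ_mul_signedQBinomial_succ (q : R) (n k : ℕ) :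
    (1 - q ^ (k + 1)) * signedQBinomial q n (k + 1) =
      (q ^ n - q ^ k) * signedQBinomial q n k := by
  have functional_equation : (1 - X) * qPochhammer (X * C q) (C q) n =
      qPochhammer X (C q) n * (1 - X * C q ^ n) := by
    rw [← qPochhammer_succ', qPochhammer_succ]
  have hcoeff := congrArg (coeff · (k + 1)) functional_equation
  simp only [sub_mul, mul_sub, one_mul, mul_one, ← mul_assoc, ← C_pow, coeff_sub, coeff_X_mul,
    coeff_mul_C, coeff_mul_X, coeff_qPochhammer_X_mul_C, signedQBinomial] at hcoeff ⊢
  linear_combination -hcoeff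

theorem sum_antidiagonal_signedQBinomial_succ_mul (q : R) (f : ℕ → ℕ → R) (n : ℕ) :
    ∑ ij ∈ antidiagonal (n + 1), signedQBinomial q (n + 1) ij.1 * f ij.1 ij.2 =
      ∑ ij ∈ antidiagonal n, signedQBinomial q n ij.1 * f ij.1 (ij.2 + 1) -
        q ^ n * ∑ ij ∈ antidiagonal n, signedQBinomial q n ij.1 * f (ij.1 + 1) ij.2 := by
  have extend : ∑ ij ∈ antidiagonal n, signedQBinomial q n ij.1 * f ij.1 (ij.2 + 1) =
      ∑ ij ∈ antidiagonal (n + 1), signedQBinomial q n ij.1 * f ij.1 ij.2 := by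
    rw [Nat.sum_antidiagonal_succ', signedQBinomial_eq_zero_of_lt q n.lt_succ_self, zero_mul,
      zero_add]
  simp only [extend, Nat.sum_antidiagonal_succ, signedQBinomial_zero_right,
    signedQBinomial_succ_succ, sub_mul, sum_sub_distrib, mul_sum, mul_assoc, add_sub_assoc]

theorem sum_antidiagonal_signedQBinomial_mul_qPochhammer (q a c : R) (n : ℕ) :
    ∑ ij ∈ antidiagonal n, signedQBinomial q n ij.1 *
      (qPochhammer a q ij.1 * c ^ ij.1 * qPochhammer (a * c * q ^ ij.1) q ij.2) =
      qPochhammer c q n := by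
  induction n generalizing a with
  | zero => simp
  | succ n ih =>
    have extend_right : ∀ ij ∈ antidiagonal n, signedQBinomial q n ij.1 *
        (qPochhammer a q ij.1 * c ^ ij.1 * qPochhammer (a * c * q ^ ij.1) q (ij.2 + 1)) =
        (1 - a * c * q ^ n) * (signedQBinomial q n ij.1 *
          (qPochhammer a q ij.1 * c ^ ij.1 * qPochhammer (a * c * q ^ ij.1) q ij.2)) := by
      intro ij hij
      rw [qPochhammer_succ, ← mem_antidiagonal.mp hij]
      ring
    have shift_left : ∀ ij ∈ antidiagonal n, signedQBinomial q n ij.1 *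
        (qPochhammer a q (ij.1 + 1) * c ^ (ij.1 + 1) *
          qPochhammer (a * c * q ^ (ij.1 + 1)) q ij.2) =
        (1 - a) * c * (signedQBinomial q n ij.1 * (qPochhammer (a * q) q ij.1 * c ^ ij.1 *
          qPochhammer (a * q * c * q ^ ij.1) q ij.2)) := by
      intro ij _
      rw [qPochhammer_succ', show a * c * q ^ (ij.1 + 1) = a * q * c * q ^ ij.1 by ring]
      ring
    rw [sum_antidiagonal_signedQBinomial_succ_mul q
        (fun i j ↦ qPochhammer a q i * c ^ i * qPochhammer (a * c * q ^ i) q j),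
      sum_congr rfl extend_right, sum_congr rfl shift_left, ← mul_sum, ← mul_sum, ih a,
      ih (a * q), qPochhammer_succ]
    ring

end CommRing

section Field

variable {K : Type*} [Field K]

theorem qPochhammer_zpow_neg_mul_pow {q : K} (hq : q ≠ 0) (n k : ℕ) :
    qPochhammer (q ^ (-(n : ℤ))) q k * (q ^ n) ^ k =
      qPochhammer q q k * signedQBinomial q n k := by
  have hcancel : q ^ (-(n : ℤ)) * q ^ n = 1 := by
    rw [zpow_neg, zpow_natCast, inv_mul_cancel₀ (pow_ne_zero n hq)]
  induction k with
  | zero => simp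
  | succ k ih =>
    rw [qPochhammer_succ, qPochhammer_succ]
    linear_combination (q ^ n - q ^ k) * ih
      - qPochhammer (q ^ (-(n : ℤ))) q k * (q ^ n) ^ k * q ^ k * hcancel
      - qPochhammer q q k * one_sub_pow_succ_mul_signedQBinomial_succ q n k

theorem q_chu_vandermonde_general (n : ℕ) {q a b : K} (ha : a ≠ 0) (hq : q ≠ 0)
    (hb : qPochhammer b q n ≠ 0) (hqq : qPochhammer q q n ≠ 0) :
    ∑ k ∈ range (n + 1),
      (qPochhammer a q k * qPochhammer (q ^ (-(n : ℤ))) q k) /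
        (qPochhammer b q k * qPochhammer q q k) * (b * q ^ n / a) ^ k
      = qPochhammer (b / a) q n / qPochhammer b q n := by
  rw [← sum_antidiagonal_signedQBinomial_mul_qPochhammer q a (b / a), mul_div_cancel₀ b ha,
    sum_div, Nat.sum_antidiagonal_eq_sum_range_succ_mk]
  refine sum_congr rfl fun k hk ↦ ?_
  obtain ⟨j, rfl⟩ := Nat.exists_eq_add_of_le (mem_range_succ_iff.mp hk)
  have hsplit := qPochhammer_add b q k j
  have hbk : qPochhammer b q k ≠ 0 := left_ne_zero_of_mul (hsplit ▸ hb)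
  have hbj : qPochhammer (b * q ^ k) q j ≠ 0 := right_ne_zero_of_mul (hsplit ▸ hb)
  have hqk : qPochhammer q q k ≠ 0 := left_ne_zero_of_mul (qPochhammer_add q q k j ▸ hqq)
  rw [Nat.add_sub_cancel_left, hsplit, mul_div_right_comm b, mul_pow, div_mul_eq_mul_div,
    div_eq_div_iff (mul_ne_zero hbk hqk) (mul_ne_zero hbk hbj)]
  linear_combination qPochhammer a q k * (b / a) ^ k * qPochhammer b q k *
    qPochhammer (b * q ^ k) q j * qPochhammer_zpow_neg_mul_pow hq (k + j) k

end Field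

/-- A q-analog of the Chu–Vandermonde sum (Gasper–Rahman (1.5.2)):
`∑_{k=0}^{n} (a;q)_k (q^{−n};q)_k / ((b;q)_k (q;q)_k) · (bq^n/a)^k = (b/a;q)_n / (b;q)_n`. -/
theorem q_chu_vandermonde (n : ℕ) (q a b : ℂ) (ha : a ≠ 0) (hq : q ≠ 0)
    (hb : ∀ k ≤ n, qShiftedFactorial b q k ≠ 0)
    (hqq : ∀ k ≤ n, qShiftedFactorial q q k ≠ 0) :
    ∑ k ∈ Finset.range (n + 1),
      (qShiftedFactorial a q k * qShiftedFactorial (q ^ (-(n : ℤ))) q k) /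
        (qShiftedFactorial b q k * qShiftedFactorial q q k) * (b * q ^ n / a) ^ k
      = qShiftedFactorial (b / a) q n / qShiftedFactorial b q n :=
  q_chu_vandermonde_general n ha hq (hb n le_rfl) (hqq n le_rfl)
end

section
/- Let n be a natural number and let (a_k), (b_k), (c_k) be sequences of complex numbers such that (a_0−b_0)(a_0−c_0) ≠ 0, (1−b_0)(1−c_0)a_0 ≠ 0, and (1−a_k)(a_k − b_k c_k) ≠ 0 for 1 ≤ k ≤ n. Then ∑_{k=0}^{n} ((a_k−b_k)(a_k−c_k))/((a_0−b_0)(a_0−c_0)) · (∏_{j=0}^{k−1} (1−b_j)(1−c_j)a_j) / (∏_{j=1}^{k} (1−a_j)(a_j − b_j c_j)) = ((1−b_0)(1−c_0)a_0)/((a_0−b_0)(a_0−c_0)) · ( ∏_{j=1}^{n} ((1−b_j)(1−c_j)a_j)/((1−a_j)(a_j−b_j c_j)) − ((1−a_0)(a_0−b_0 c_0))/((1−b_0)(1−c_0)a_0) ). -/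
/-!
Put `u k = (1 - b k) * (1 - c k) * a k` and `v k = (1 - a k) * (a k - b k * c k)`, so that
`(a k - b k) * (a k - c k) = u k - v k` by the case `n = 1` of the `q`-Pfaff–Saalschütz sum.
The quotients `T k = (u 0 ⋯ u k) / (v 1 ⋯ v k)` satisfy
`T k - T (k - 1) = (u k - v k) * (u 0 ⋯ u (k - 1)) / (v 1 ⋯ v k)` for `k ≥ 1`, so the sum
telescopes; the term `k = 0` contributes `u 0 - v 0`.
-/

open Finset

theorem sub_mul_sub_eq_one_sub_mul_sub {R : Type*} [CommRing R] (a b c : R) :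
    (a - b) * (a - c) = (1 - b) * (1 - c) * a - (1 - a) * (a - b * c) := by
  ring

section Field

variable {K : Type*} [Field K]

theorem prod_range_succ_div_prod_Icc (u v : ℕ → K) (n : ℕ) :
    (∏ j ∈ range (n + 1), u j) / ∏ j ∈ Icc 1 n, v j = u 0 * ∏ j ∈ Icc 1 n, u j / v j := by
  rw [prod_range_eq_mul_Ico u n.succ_pos, Nat.succ_eq_add_one, Ico_add_one_right_eq_Icc,
    mul_div_assoc, prod_div_distrib]

theorem sum_range_succ_sub_mul_prod_div_prod (u v : ℕ → K) (n : ℕ)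
    (hv : ∀ k ∈ Icc 1 n, v k ≠ 0) :
    ∑ k ∈ range (n + 1), (u k - v k) * (∏ j ∈ range k, u j) / ∏ j ∈ Icc 1 k, v j
      = (∏ j ∈ range (n + 1), u j) / (∏ j ∈ Icc 1 n, v j) - v 0 := by
  induction n with
  | zero => simp
  | succ n ih =>
    have hv_last : v (n + 1) ≠ 0 := hv (n + 1) (right_mem_Icc.mpr n.succ_pos)
    have hv_init : ∀ k ∈ Icc 1 n, v k ≠ 0 := fun k hk =>
      hv k (Icc_subset_Icc_right n.le_succ hk)
    set U := ∏ j ∈ range (n + 1), u j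
    set V := ∏ j ∈ Icc 1 n, v j
    have hU : ∏ j ∈ range (n + 2), u j = u (n + 1) * U := by
      rw [prod_range_succ, mul_comm]
    have hV : ∏ j ∈ Icc 1 (n + 1), v j = v (n + 1) * V := by
      rw [prod_Icc_succ_top n.succ_pos, mul_comm]
    calc ∑ k ∈ range (n + 2), (u k - v k) * (∏ j ∈ range k, u j) / ∏ j ∈ Icc 1 k, v j
        = (U / V - v 0) + (u (n + 1) - v (n + 1)) * U / (v (n + 1) * V) := by
          rw [sum_range_succ, ih hv_init, hV]
      _ = u (n + 1) * U / (v (n + 1) * V) - v 0 := by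
          rw [sub_mul, sub_div, mul_div_mul_left U V hv_last]
          ring
      _ = (∏ j ∈ range (n + 2), u j) / (∏ j ∈ Icc 1 (n + 1), v j) - v 0 := by
          rw [hU, hV]

theorem macdonald_pfaff_saalschutz_general (n : ℕ) (a b c : ℕ → K)
    (hv : ∀ k ∈ Icc 1 n, (1 - a k) * (a k - b k * c k) ≠ 0) :
    ∑ k ∈ range (n + 1),
      (a k - b k) * (a k - c k) * (∏ j ∈ range k, (1 - b j) * (1 - c j) * a j) /
        (∏ j ∈ Icc 1 k, (1 - a j) * (a j - b j * c j))
      = (1 - b 0) * (1 - c 0) * a 0 *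
          (∏ j ∈ Icc 1 n, (1 - b j) * (1 - c j) * a j / ((1 - a j) * (a j - b j * c j))) -
        (1 - a 0) * (a 0 - b 0 * c 0) := by
  have telescoped := sum_range_succ_sub_mul_prod_div_prod
    (fun k => (1 - b k) * (1 - c k) * a k) (fun k => (1 - a k) * (a k - b k * c k)) n hv
  rw [prod_range_succ_div_prod_Icc] at telescoped
  simpa only [← sub_mul_sub_eq_one_sub_mul_sub] using telescoped

end Field

/-- Macdonald's generalized hypergeometric identity obtained from Euler's
Telescoping Lemma and the elementary relation
`(1−b)(1−c)a − (1−a)(a−bc) = (a−b)(a−c)`. -/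
theorem macdonald_pfaff_saalschutz (n : ℕ) (a b c : ℕ → ℂ)
    (h0 : (a 0 - b 0) * (a 0 - c 0) ≠ 0)
    (hu0 : (1 - b 0) * (1 - c 0) * a 0 ≠ 0)
    (hk : ∀ k, 1 ≤ k → k ≤ n → (1 - a k) * (a k - b k * c k) ≠ 0) :
    ∑ k ∈ Finset.range (n + 1),
      ((a k - b k) * (a k - c k)) / ((a 0 - b 0) * (a 0 - c 0)) *
        (∏ j ∈ Finset.range k, (1 - b j) * (1 - c j) * a j) /
          (∏ j ∈ Finset.Icc 1 k, (1 - a j) * (a j - b j * c j))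
      = ((1 - b 0) * (1 - c 0) * a 0) / ((a 0 - b 0) * (a 0 - c 0)) *
          ((∏ j ∈ Finset.Icc 1 n,
              ((1 - b j) * (1 - c j) * a j) / ((1 - a j) * (a j - b j * c j))) -
            ((1 - a 0) * (a 0 - b 0 * c 0)) / ((1 - b 0) * (1 - c 0) * a 0)) := by
  have hv : ∀ k ∈ Icc 1 n, (1 - a k) * (a k - b k * c k) ≠ 0 := fun k hk_mem =>
    hk k (mem_Icc.mp hk_mem).1 (mem_Icc.mp hk_mem).2
  simp only [div_mul_eq_mul_div, div_right_comm _ ((a 0 - b 0) * (a 0 - c 0)), ← sum_div]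
  rw [macdonald_pfaff_saalschutz_general n a b c hv,
    mul_sub ((1 - b 0) * (1 - c 0) * a 0), mul_div_cancel₀ _ hu0]
end

section
/- Let n be a natural number and let (a_k), (b_k), (c_k), (d_k) be sequences of complex numbers such that (a_0−b_0)(a_0−c_0)(a_0−d_0)(a_0−b_0c_0d_0) ≠ 0, (1−b_0)(1−c_0)(1−d_0)(a_0²−b_0c_0d_0)a_0 ≠ 0, and (1−a_k)(a_k−b_k c_k)(a_k−b_k d_k)(a_k−c_k d_k) ≠ 0 for 1 ≤ k ≤ n. Then ∑_{k=0}^{n} ((a_k−b_k)(a_k−c_k)(a_k−d_k)(a_k−b_k c_k d_k))/((a_0−b_0)(a_0−c_0)(a_0−d_0)(a_0−b_0c_0d_0)) · (∏_{j=0}^{k−1} (1−b_j)(1−c_j)(1−d_j)(a_j²−b_j c_j d_j)a_j) / (∏_{j=1}^{k} (1−a_j)(a_j−b_j c_j)(a_j−b_j d_j)(a_j−c_j d_j)) = ((1−b_0)(1−c_0)(1−d_0)(a_0²−b_0c_0d_0)a_0)/((a_0−b_0)(a_0−c_0)(a_0−d_0)(a_0−b_0c_0d_0)) · ( ∏_{j=1}^{n}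 ((1−b_j)(1−c_j)(1−d_j)(a_j²−b_j c_j d_j)a_j)/((1−a_j)(a_j−b_j c_j)(a_j−b_j d_j)(a_j−c_j d_j)) − ((1−a_0)(a_0−b_0 c_0)(a_0−b_0 d_0)(a_0−c_0 d_0))/((1−b_0)(1−c_0)(1−d_0)(a_0²−b_0c_0d_0)a_0) ). -/
/-!
Write `u k` and `v k` for the two products on the left of the elementary relation, so that its right
side is `u k - v k`. In the sum of `(u k - v k) * (∏ j < k, u j) / ∏ 1 ≤ j ≤ k, v j` every term with
`k ≥ 1` is then the increment of the partial products `u 0 * ∏ 1 ≤ j ≤ k, u j / v j`, and the sum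
telescopes.
-/

section

variable {K : Type*} [Field K]

theorem sub_mul_prod_range_succ_div_prod_Icc (u v : ℕ → K) (k : ℕ) (hv : v (k + 1) ≠ 0) :
    (u (k + 1) - v (k + 1)) * (∏ j ∈ Finset.range (k + 1), u j) / ∏ j ∈ Finset.Icc 1 (k + 1), v j =
      u 0 * (∏ j ∈ Finset.Icc 1 (k + 1), u j / v j) - u 0 * ∏ j ∈ Finset.Icc 1 k, u j / v j := by
  have hu : ∏ j ∈ Finset.range (k + 1), u j = u 0 * ∏ j ∈ Finset.Icc 1 k, u j := by
    rw [Finset.prod_range_eq_mul_Ico u k.add_one_pos, Finset.Ico_add_one_right_eq_Icc]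
  rw [hu, Finset.prod_Icc_succ_top (by lia), Finset.prod_Icc_succ_top (by lia),
    Finset.prod_div_distrib]
  field_simp

theorem sum_sub_mul_prod_range_div_prod_Icc (u v : ℕ → K) (n : ℕ)
    (hv : ∀ k, 1 ≤ k → k ≤ n → v k ≠ 0) :
    ∑ k ∈ Finset.range (n + 1),
        (u k - v k) * (∏ j ∈ Finset.range k, u j) / ∏ j ∈ Finset.Icc 1 k, v j =
      u 0 * (∏ j ∈ Finset.Icc 1 n, u j / v j) - v 0 := by
  rw [Finset.sum_range_succ', Finset.sum_congr rfl fun k hk ↦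
      sub_mul_prod_range_succ_div_prod_Icc u v k (hv _ k.add_one_pos (Finset.mem_range.mp hk)),
    Finset.sum_range_sub fun k ↦ u 0 * ∏ j ∈ Finset.Icc 1 k, u j / v j]
  simp

theorem div_mul_sub_div {x : K} (hx : x ≠ 0) (y z w : K) :
    x / w * (y - z / x) = (x * y - z) / w := by
  rw [div_mul_eq_mul_div, mul_sub, mul_div_cancel₀ _ hx]

/-- The case `n = 1` of Jackson's q-Dougall summation. -/
theorem q_dougall_elementary_relation {R : Type*} [CommRing R] (a b c d : R) :
    (1 - b) * (1 - c) * (1 - d) * (a ^ 2 - b * c * d) * a -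
        (1 - a) * (a - b * c) * (a - b * d) * (a - c * d) =
      (a - b) * (a - c) * (a - d) * (a - b * c * d) := by
  ring

theorem macdonald_q_dougall_general (n : ℕ) (a b c d : ℕ → K)
    (hk : ∀ k, 1 ≤ k → k ≤ n →
      (1 - a k) * (a k - b k * c k) * (a k - b k * d k) * (a k - c k * d k) ≠ 0) :
    ∑ k ∈ Finset.range (n + 1),
      ((a k - b k) * (a k - c k) * (a k - d k) * (a k - b k * c k * d k)) *
        (∏ j ∈ Finset.range k,
            (1 - b j) * (1 - c j) * (1 - d j) * ((a j) ^ 2 - b j * c j * d j) * a j) /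
          (∏ j ∈ Finset.Icc 1 k,
            (1 - a j) * (a j - b j * c j) * (a j - b j * d j) * (a j - c j * d j))
      = ((1 - b 0) * (1 - c 0) * (1 - d 0) * ((a 0) ^ 2 - b 0 * c 0 * d 0) * a 0) *
          (∏ j ∈ Finset.Icc 1 n,
            ((1 - b j) * (1 - c j) * (1 - d j) * ((a j) ^ 2 - b j * c j * d j) * a j) /
              ((1 - a j) * (a j - b j * c j) * (a j - b j * d j) * (a j - c j * d j))) -
          (1 - a 0) * (a 0 - b 0 * c 0) * (a 0 - b 0 * d 0) * (a 0 - c 0 * d 0) := by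
  simp only [← q_dougall_elementary_relation]
  exact sum_sub_mul_prod_range_div_prod_Icc
    (fun j ↦ (1 - b j) * (1 - c j) * (1 - d j) * ((a j) ^ 2 - b j * c j * d j) * a j)
    (fun j ↦ (1 - a j) * (a j - b j * c j) * (a j - b j * d j) * (a j - c j * d j)) n hk

end

/-- Macdonald's generalized hypergeometric identity obtained from Euler's
Telescoping Lemma and the elementary relation
`(1−b)(1−c)(1−d)(a²−bcd)a − (1−a)(a−bc)(a−bd)(a−cd) = (a−b)(a−c)(a−d)(a−bcd)`. -/
theorem macdonald_q_dougall (n : ℕ) (a b c d : ℕ → ℂ)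
    (h0 : (a 0 - b 0) * (a 0 - c 0) * (a 0 - d 0) * (a 0 - b 0 * c 0 * d 0) ≠ 0)
    (hu0 : (1 - b 0) * (1 - c 0) * (1 - d 0) * ((a 0) ^ 2 - b 0 * c 0 * d 0) * a 0 ≠ 0)
    (hk : ∀ k, 1 ≤ k → k ≤ n →
      (1 - a k) * (a k - b k * c k) * (a k - b k * d k) * (a k - c k * d k) ≠ 0) :
    ∑ k ∈ Finset.range (n + 1),
      ((a k - b k) * (a k - c k) * (a k - d k) * (a k - b k * c k * d k)) /
          ((a 0 - b 0) * (a 0 - c 0) * (a 0 - d 0) * (a 0 - b 0 * c 0 * d 0)) *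
        (∏ j ∈ Finset.range k,
            (1 - b j) * (1 - c j) * (1 - d j) * ((a j) ^ 2 - b j * c j * d j) * a j) /
          (∏ j ∈ Finset.Icc 1 k,
            (1 - a j) * (a j - b j * c j) * (a j - b j * d j) * (a j - c j * d j))
      = ((1 - b 0) * (1 - c 0) * (1 - d 0) * ((a 0) ^ 2 - b 0 * c 0 * d 0) * a 0) /
            ((a 0 - b 0) * (a 0 - c 0) * (a 0 - d 0) * (a 0 - b 0 * c 0 * d 0)) *
          ((∏ j ∈ Finset.Icc 1 n,
              ((1 - b j) * (1 - c j) * (1 - d j) * ((a j) ^ 2 - b j * c j * d j) * a j) /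
                ((1 - a j) * (a j - b j * c j) * (a j - b j * d j) * (a j - c j * d j))) -
            ((1 - a 0) * (a 0 - b 0 * c 0) * (a 0 - b 0 * d 0) * (a 0 - c 0 * d 0)) /
              ((1 - b 0) * (1 - c 0) * (1 - d 0) * ((a 0) ^ 2 - b 0 * c 0 * d 0) * a 0)) := by
  rw [div_mul_sub_div hu0, ← macdonald_q_dougall_general n a b c d hk, Finset.sum_div]
  exact Finset.sum_congr rfl fun k _ ↦ by rw [div_mul_eq_mul_div, div_right_comm]
end
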